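/- arXiv:2005.01036 — 2 statements merged into one kernel-verified Lean document; each statement's English description precedes it below -/
import Mathlib

section
/- There exists a constant c > 0 such that for every u in the Schwartz space 𝒮(ℝ, ℂ⁴) and every λ ≥ 1: ‖x²u‖ + ‖u''‖ ≤ c(‖Nu‖ + ‖u‖). In other words, multiplication by x² and the operator D² = −d²/dx² are bounded from the domain of N (with graph norm) to L²(ℝ, ℂ⁴), uniformly in λ. -/
noncomputable section

open MeasureTheory

abbrev V4 : Type := EuclideanSpace ℂ (Fin 4)

/-- A `4 × 4` complex matrix acting on `ℂ⁴` as a continuous linear map. -/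
def Mop (A : Matrix (Fin 4) (Fin 4) ℂ) : V4 →L[ℂ] V4 := Matrix.toEuclideanCLM (𝕜 := ℂ) A

/-- The `L²` inner product `⟨u, v⟩ = ∫ ⟨u(x), v(x)⟩ dx` (conjugate-linear in the first slot). -/
def L2inner (u v : ℝ → V4) : ℂ := ∫ x : ℝ, (inner ℂ (u x) (v x) : ℂ)

/-- The `L²` norm `‖u‖ = (∫ ‖u(x)‖² dx)^{1/2}`. -/
def L2norm (u : ℝ → V4) : ℝ := Real.sqrt (∫ x : ℝ, ‖u x‖ ^ 2)

/-- The operator `D = −i d/dx`. -/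
def Dop (u : ℝ → V4) : ℝ → V4 := fun x => (-Complex.I) • deriv u x

/-- The per-mode free Dirac Hamiltonian `H₀u = Γ¹Du + λgΓ²u + fu`. -/
def H0op (Γ1 Γ2 : Matrix (Fin 4) (Fin 4) ℂ) (g f : ℝ → ℝ) (lam : ℝ) (u : ℝ → V4) : ℝ → V4 :=
  fun x => Mop Γ1 (Dop u x) + (lam * g x) • Mop Γ2 (u x) + f x • u x

/-- The operator `Qu = −u'' + λ²g²u`. -/
def Qop (g : ℝ → ℝ) (lam : ℝ) (u : ℝ → V4) : ℝ → V4 :=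
  fun x => -(deriv (deriv u) x) + (lam ^ 2 * g x ^ 2) • u x

/-- The comparison operator `Nu = Qu + (1 + x²)u`. -/
def Nop (g : ℝ → ℝ) (lam : ℝ) (u : ℝ → V4) : ℝ → V4 :=
  fun x => Qop g lam u x + (1 + x ^ 2) • u x

/-!
`N` is the Schrödinger operator `u ↦ -u'' + W u` with weight `W = λ²g² + 1 + x²`. The hypothesis on
`g` gives `|W'| ≤ K W` with `K` independent of `λ`. Expanding the square,
`‖-u'' + W u‖² = ‖u''‖² + ‖W u‖² - 2 ∫ W ⟪u'', u⟫`, and integrating the total derivative of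
`W ⟪u', u⟫` turns the cross term into `2 ∫ W ‖u'‖² + 2 ∫ W' ⟪u', u⟫`. Since
`|W' ⟪u', u⟫| ≤ K W ‖u'‖ ‖u‖`, the last integral is absorbed by `W ‖u'‖²`, half of `‖W u‖²` and a
multiple of `‖u‖²`.
-/

open Filter Set

open scoped SchwartzMap RealInnerProductSpace

section Integrability

lemma frequently_norm_lt_of_integrable {F : Type*} [NormedAddCommGroup F] {h : ℝ → F}
    (hh : Integrable h) {ε : ℝ} (hε : 0 < ε) : ∃ᶠ x in atTop, ‖h x‖ < ε := by
  intro hlarge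
  obtain ⟨a, ha⟩ := eventually_atTop.mp hlarge
  have hsub : Ici a ⊆ {x | ε ≤ ‖h x‖} := fun x hx => not_lt.mp (ha x hx)
  have hfin := (measure_mono hsub).trans_lt (hh.measure_norm_ge_lt_top hε)
  simp at hfin

lemma integrable_of_hasDerivAt_add_of_nonneg {f p q : ℝ → ℝ} (hf : Integrable f)
    (hderiv : ∀ x, HasDerivAt f (p x + q x) x) (hp : LocallyIntegrable p) (hp0 : ∀ x, 0 ≤ p x)
    (hq : Integrable q) : Integrable p := by
  set S : Set ℝ := {x | ‖f x‖ + ‖f (-x)‖ < 1}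
  -- `f` need not be bounded, so the limits are taken along the radii in `S`.
  have : (atTop ⊓ 𝓟 S).NeBot := frequently_mem_iff_neBot.mp <|
    (frequently_norm_lt_of_integrable (hf.norm.add hf.comp_neg.norm) one_pos).mono
      fun _ hx => (le_abs_self _).trans_lt hx
  have hpint (a b : ℝ) : IntervalIntegrable p volume a b :=
    (hp.integrableOn_isCompact isCompact_uIcc).intervalIntegrable
  refine integrable_of_intervalIntegral_norm_bounded (l := atTop ⊓ 𝓟 S) (a := Neg.neg) (b := id)
    (1 + ∫ x, ‖q x‖) (fun x => (hpint (-x) x).1)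
    (tendsto_neg_atTop_atBot.mono_left inf_le_left) (tendsto_id.mono_left inf_le_left) ?_
  filter_upwards [mem_inf_of_right (mem_principal_self S)] with x hxS
  have hftc := intervalIntegral.integral_eq_sub_of_hasDerivAt (a := -x) (b := x)
    (fun y _ => hderiv y) ((hpint _ _).add hq.intervalIntegrable)
  rw [intervalIntegral.integral_add (hpint _ _) hq.intervalIntegrable] at hftc
  have hboundary : f x - f (-x) ≤ 1 := calc
    f x - f (-x) ≤ ‖f x - f (-x)‖ := le_abs_self _
    _ ≤ ‖f x‖ + ‖f (-x)‖ := norm_sub_le _ _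
    _ ≤ 1 := hxS.le
  have hrest : -∫ y in -x..x, q y ≤ ∫ y, ‖q y‖ := calc
    -∫ y in -x..x, q y ≤ ‖∫ y in -x..x, q y‖ := neg_le_abs _
    _ ≤ ∫ y in uIoc (-x) x, ‖q y‖ := intervalIntegral.norm_integral_le_integral_norm_uIoc
    _ ≤ ∫ y, ‖q y‖ := setIntegral_le_integral hq.norm (.of_forall fun _ => norm_nonneg _)
  simp only [id_eq, Real.norm_of_nonneg (hp0 _)]
  linarith

lemma integrable_inner_of_memLp_two {𝕜 α F : Type*} [RCLike 𝕜] [NormedAddCommGroup F]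
    [InnerProductSpace 𝕜 F] [MeasurableSpace α] {μ : Measure α} {f h : α → F}
    (hf : MemLp f 2 μ) (hh : MemLp h 2 μ) : Integrable (fun x => inner 𝕜 (f x) (h x)) μ :=
  (hf.norm.integrable_mul hh.norm).mono (hf.1.inner hh.1) <| .of_forall fun x => by
    simpa using norm_inner_le_norm (𝕜 := 𝕜) (f x) (h x)

lemma lpNorm_two_eq_sqrt_integral {α F : Type*} [NormedAddCommGroup F] [MeasurableSpace α]
    {μ : Measure α} {f : α → F} (hf : AEStronglyMeasurable f μ) :
    lpNorm f 2 μ = √(∫ x, ‖f x‖ ^ 2 ∂μ) := by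
  simp [lpNorm_eq_integral_norm_rpow_toReal two_ne_zero ENNReal.ofNat_ne_top hf, Real.sqrt_eq_rpow]

lemma lpNorm_two_sq {α F : Type*} [NormedAddCommGroup F] [MeasurableSpace α]
    {μ : Measure α} {f : α → F} (hf : AEStronglyMeasurable f μ) :
    lpNorm f 2 μ ^ 2 = ∫ x, ‖f x‖ ^ 2 ∂μ := by
  rw [lpNorm_two_eq_sqrt_integral hf, Real.sq_sqrt (integral_nonneg fun _ => sq_nonneg _)]

lemma memLp_smul_schwartzMap_of_norm_le {D F : Type*} [NormedAddCommGroup D] [NormedSpace ℝ D]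
    [NormedAddCommGroup F] [NormedSpace ℝ F]
    [MeasurableSpace D] [OpensMeasurableSpace D] [SecondCountableTopologyEither D F]
    {μ : Measure D} [μ.HasTemperateGrowth] {W p : D → ℝ} {C : ℝ}
    (hW : Continuous W) (hp : p.HasTemperateGrowth) (hWp : ∀ x, ‖W x‖ ≤ C * ‖p x‖)
    (u : 𝓢(D, F)) (q : ENNReal) : MemLp (fun x => W x • u x) q μ := by
  refine ((SchwartzMap.smulLeftCLM F p u).memLp q μ).of_le_mul (c := C)
    (hW.smul u.continuous).aestronglyMeasurable (.of_forall fun x => ?_)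
  rw [SchwartzMap.smulLeftCLM_apply_apply hp, norm_smul, norm_smul, ← mul_assoc]
  exact mul_le_mul_of_nonneg_right (hWp x) (norm_nonneg _)

end Integrability

section SchrodingerOperator

variable {E : Type*} [NormedAddCommGroup E] [InnerProductSpace ℝ E]

/-- The one-dimensional Schrödinger operator `u ↦ -u'' + W u` with potential `W`. -/
def schrodingerOp (W : ℝ → ℝ) (u : ℝ → E) : ℝ → E :=
  fun x => -deriv (deriv u) x + W x • u x

/-- The functions in the Sobolev space `H²(ℝ)` that are twice differentiable at every point, so that
`deriv` computes the weak derivatives. -/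
structure MemH2 (u : ℝ → E) : Prop where
  differentiable : Differentiable ℝ u
  differentiable_deriv : Differentiable ℝ (deriv u)
  memLp : MemLp u 2
  memLp_deriv : MemLp (deriv u) 2
  memLp_deriv_deriv : MemLp (deriv (deriv u)) 2

lemma MemH2.of_schwartzMap (u : 𝓢(ℝ, E)) : MemH2 u where
  differentiable := u.differentiable
  differentiable_deriv := (SchwartzMap.derivCLM ℝ E u).differentiable
  memLp := u.memLp 2
  memLp_deriv := (SchwartzMap.derivCLM ℝ E u).memLp 2 volume
  memLp_deriv_deriv := (SchwartzMap.derivCLM ℝ E (SchwartzMap.derivCLM ℝ E u)).memLp 2 volume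

lemma norm_neg_add_smul_sq (W : ℝ) (u w : E) :
    ‖-w + W • u‖ ^ 2 = ‖w‖ ^ 2 - 2 * (W * ⟪w, u⟫) + ‖W • u‖ ^ 2 := by
  rw [norm_add_sq_real, norm_neg, inner_neg_left, inner_smul_right]
  ring

lemma norm_sq_add_half_norm_smul_sq_le {W W' K : ℝ} (hW : 0 ≤ W) (hW' : |W'| ≤ K * W) (u v w : E) :
    ‖w‖ ^ 2 + 1 / 2 * ‖W • u‖ ^ 2 ≤ ‖-w + W • u‖ ^ 2 + K ^ 4 / 8 * ‖u‖ ^ 2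
      + 2 * (W * ‖v‖ ^ 2 + (W' * ⟪v, u⟫ + W * ⟪w, u⟫)) := by
  have hcross : |W' * ⟪v, u⟫| ≤ K * W * (‖v‖ * ‖u‖) := by
    rw [abs_mul]
    exact mul_le_mul hW' (abs_real_inner_le_norm v u) (abs_nonneg _) ((abs_nonneg _).trans hW')
  have hsmul : ‖W • u‖ ^ 2 = W ^ 2 * ‖u‖ ^ 2 := by
    rw [norm_smul, mul_pow, Real.norm_eq_abs, sq_abs]
  -- The difference of the two sides is at least half of the sum of these two squares.
  have hv : 0 ≤ W * (2 * ‖v‖ - K * ‖u‖) ^ 2 := by positivity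
  have hu : 0 ≤ (W - K ^ 2 / 2) ^ 2 * ‖u‖ ^ 2 := by positivity
  rw [norm_neg_add_smul_sq, hsmul]
  linarith [neg_le_of_abs_le hcross]

variable {W : ℝ → ℝ} {K : ℝ} {u : ℝ → E}

lemma memLp_smul_of_memLp_schrodingerOp (hu : MemLp (deriv (deriv u)) 2)
    (hN : MemLp (schrodingerOp W u) 2) : MemLp (fun x => W x • u x) 2 := by
  refine (memLp_congr_ae (.of_forall fun x => ?_)).mp (hN.add hu)
  simp [schrodingerOp]

lemma hasDerivAt_mul_inner_deriv (hW : Differentiable ℝ W) (hu : Differentiable ℝ u)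
    (hu' : Differentiable ℝ (deriv u)) (x : ℝ) :
    HasDerivAt (fun y => W y * ⟪deriv u y, u y⟫)
      (W x * ‖deriv u x‖ ^ 2 + (deriv W x * ⟪deriv u x, u x⟫ + W x * ⟪deriv (deriv u) x, u x⟫))
      x := by
  refine ((hW x).hasDerivAt.mul ((hu' x).hasDerivAt.inner ℝ (hu x).hasDerivAt)).congr_deriv ?_
  rw [real_inner_self_eq_norm_sq]
  ring

lemma integrable_mul_inner_of_memLp_smul {v : ℝ → E} (hv : MemLp v 2)
    (hWu : MemLp (fun x => W x • u x) 2) : Integrable (fun x => W x * ⟪v x, u x⟫) := by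
  simpa only [inner_smul_right] using integrable_inner_of_memLp_two (𝕜 := ℝ) hv hWu

lemma integrable_deriv_mul_inner (hW' : ∀ x, |deriv W x| ≤ K * W x)
    (hu : MemH2 u) (hWu : MemLp (fun x => W x • u x) 2) :
    Integrable (fun x => deriv W x * ⟪deriv u x, u x⟫) := by
  refine ((integrable_mul_inner_of_memLp_smul hu.memLp_deriv hWu).const_mul K).mono
    ((measurable_deriv W).aestronglyMeasurable.mul (hu.memLp_deriv.1.inner hu.memLp.1))
    (.of_forall fun x => ?_)
  rw [norm_mul, ← mul_assoc, norm_mul]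
  exact mul_le_mul_of_nonneg_right ((hW' x).trans (le_abs_self _)) (norm_nonneg _)

lemma integrable_total_deriv_mul_inner (hW : Differentiable ℝ W) (hW0 : ∀ x, 0 ≤ W x)
    (hW' : ∀ x, |deriv W x| ≤ K * W x) (hu : MemH2 u) (hWu : MemLp (fun x => W x • u x) 2) :
    Integrable (fun x => W x * ‖deriv u x‖ ^ 2
      + (deriv W x * ⟪deriv u x, u x⟫ + W x * ⟪deriv (deriv u) x, u x⟫)) := by
  have hrest := (integrable_deriv_mul_inner hW' hu hWu).add
    (integrable_mul_inner_of_memLp_smul hu.memLp_deriv_deriv hWu)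
  have hcont : Continuous (fun x => W x * ‖deriv u x‖ ^ 2) :=
    hW.continuous.mul (hu.differentiable_deriv.continuous.norm.pow 2)
  exact (integrable_of_hasDerivAt_add_of_nonneg
    (integrable_mul_inner_of_memLp_smul hu.memLp_deriv hWu)
    (hasDerivAt_mul_inner_deriv hW hu.differentiable hu.differentiable_deriv)
    hcont.locallyIntegrable (fun x => mul_nonneg (hW0 x) (sq_nonneg _)) hrest).add hrest

lemma lpNorm_deriv_deriv_sq_add_half_lpNorm_smul_sq_le (hW : Differentiable ℝ W)
    (hW0 : ∀ x, 0 ≤ W x) (hW' : ∀ x, |deriv W x| ≤ K * W x) (hu : MemH2 u)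
    (hN : MemLp (schrodingerOp W u) 2) :
    lpNorm (deriv (deriv u)) 2 volume ^ 2
        + 1 / 2 * lpNorm (fun x => W x • u x) 2 volume ^ 2 ≤
      lpNorm (schrodingerOp W u) 2 volume ^ 2 + K ^ 4 / 8 * lpNorm u 2 volume ^ 2 := by
  have hWu := memLp_smul_of_memLp_schrodingerOp hu.memLp_deriv_deriv hN
  have hu_sq := hu.memLp.integrable_norm_pow two_ne_zero
  have hN_sq := hN.integrable_norm_pow two_ne_zero
  have hu''_sq := hu.memLp_deriv_deriv.integrable_norm_pow two_ne_zero
  have hWu_sq := hWu.integrable_norm_pow two_ne_zero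
  have htotal := integrable_total_deriv_mul_inner hW hW0 hW' hu hWu
  have hzero := integral_eq_zero_of_hasDerivAt_of_integrable
    (hasDerivAt_mul_inner_deriv hW hu.differentiable hu.differentiable_deriv) htotal
    (integrable_mul_inner_of_memLp_smul hu.memLp_deriv hWu)
  have hint := integral_mono (hu''_sq.add (hWu_sq.const_mul (1 / 2)))
    ((hN_sq.add (hu_sq.const_mul (K ^ 4 / 8))).add (htotal.const_mul 2))
    fun x => norm_sq_add_half_norm_smul_sq_le (hW0 x) (hW' x) (u x) (deriv u x) (deriv (deriv u) x)
  rw [integral_add' hu''_sq (hWu_sq.const_mul _),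
    integral_add' (hN_sq.add (hu_sq.const_mul _)) (htotal.const_mul _),
    integral_add' hN_sq (hu_sq.const_mul _), integral_const_mul, integral_const_mul,
    integral_const_mul, hzero, mul_zero, add_zero] at hint
  rwa [lpNorm_two_sq hu.memLp.1, lpNorm_two_sq hN.1, lpNorm_two_sq hu.memLp_deriv_deriv.1,
    lpNorm_two_sq hWu.1]

lemma lpNorm_smul_add_lpNorm_deriv_deriv_le (hW : Differentiable ℝ W)
    (hW0 : ∀ x, 0 ≤ W x) (hW' : ∀ x, |deriv W x| ≤ K * W x) (hu : MemH2 u)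
    (hN : MemLp (schrodingerOp W u) 2) :
    lpNorm (fun x => W x • u x) 2 volume + lpNorm (deriv (deriv u)) 2 volume ≤
      (3 + 2 * K ^ 2) * (lpNorm (schrodingerOp W u) 2 volume + lpNorm u 2 volume) := by
  have hsq := lpNorm_deriv_deriv_sq_add_half_lpNorm_smul_sq_le hW hW0 hW' hu hN
  set n := lpNorm (schrodingerOp W u) 2 volume
  set m := lpNorm u 2 volume
  have hn : 0 ≤ n := lpNorm_nonneg
  have hm : 0 ≤ m := lpNorm_nonneg
  have hcross : 0 ≤ n * (K ^ 2 * m) := by positivity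
  have hm_sq : 0 ≤ K ^ 4 * m ^ 2 := by positivity
  have hu'' : lpNorm (deriv (deriv u)) 2 volume ≤ n + K ^ 2 * m :=
    le_of_sq_le_sq (by linarith [sq_nonneg (lpNorm (fun x => W x • u x) 2 volume)]) (by positivity)
  have hWu : lpNorm (fun x => W x • u x) 2 volume ≤ 2 * n + K ^ 2 * m :=
    le_of_sq_le_sq (by linarith [sq_nonneg (lpNorm (deriv (deriv u)) 2 volume), sq_nonneg n])
      (by positivity)
  have hKn : 0 ≤ K ^ 2 * n := by positivity
  linarith

end SchrodingerOperator

section ComparisonOperator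

/-- The potential `W = λ²g² + 1 + x²` for which the comparison operator `N` is
`schrodingerOp W`. -/
def comparisonWeight (g : ℝ → ℝ) (lam : ℝ) (x : ℝ) : ℝ := lam ^ 2 * g x ^ 2 + (1 + x ^ 2)

lemma schrodingerOp_comparisonWeight (g : ℝ → ℝ) (lam : ℝ) (u : ℝ → V4) :
    schrodingerOp (comparisonWeight g lam) u = Nop g lam u := by
  ext1 x
  simp only [schrodingerOp, comparisonWeight, Nop, Qop, add_smul, add_assoc]

variable {g : ℝ → ℝ} {lam : ℝ}

lemma sq_le_comparisonWeight (g : ℝ → ℝ) (lam x : ℝ) : x ^ 2 ≤ comparisonWeight g lam x := by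
  unfold comparisonWeight
  linarith [mul_nonneg (sq_nonneg lam) (sq_nonneg (g x))]

lemma comparisonWeight_nonneg (g : ℝ → ℝ) (lam x : ℝ) : 0 ≤ comparisonWeight g lam x :=
  (sq_nonneg x).trans (sq_le_comparisonWeight g lam x)

lemma comparisonWeight_le {Cb : ℝ} (hg : ∀ x, |g x| ≤ Cb) (lam x : ℝ) :
    comparisonWeight g lam x ≤ (lam ^ 2 * Cb ^ 2 + 1) * (1 + x ^ 2) := by
  have hsq : lam ^ 2 * g x ^ 2 ≤ lam ^ 2 * Cb ^ 2 :=
    mul_le_mul_of_nonneg_left (sq_le_sq.mpr ((hg x).trans (le_abs_self Cb))) (sq_nonneg lam)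
  have hnonneg : 0 ≤ lam ^ 2 * Cb ^ 2 * x ^ 2 := by positivity
  unfold comparisonWeight
  linarith

lemma hasDerivAt_comparisonWeight {x : ℝ} (hg : DifferentiableAt ℝ g x) :
    HasDerivAt (comparisonWeight g lam) (lam ^ 2 * (2 * (g x * deriv g x)) + 2 * x) x := by
  refine (((hg.hasDerivAt.pow 2).const_mul (lam ^ 2)).add
    ((hasDerivAt_pow 2 x).const_add 1)).congr_deriv ?_
  simp [mul_assoc]

lemma abs_deriv_comparisonWeight_le {x Cg : ℝ} (hg : DifferentiableAt ℝ g x)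
    (hg' : |deriv g x| ≤ Cg * |g x|) :
    |deriv (comparisonWeight g lam) x| ≤ (1 + 2 * |Cg|) * comparisonWeight g lam x := by
  have hgg' : |g x * deriv g x| ≤ |Cg| * g x ^ 2 := calc
    |g x * deriv g x| = |g x| * |deriv g x| := abs_mul _ _
    _ ≤ |g x| * (|Cg| * |g x|) := by gcongr; exact hg'.trans (by gcongr; exact le_abs_self Cg)
    _ = |Cg| * g x ^ 2 := by rw [← sq_abs (g x)]; ring
  have hx : |2 * x| ≤ 1 + x ^ 2 :=
    abs_le.mpr ⟨by linarith [sq_nonneg (1 + x)], by linarith [sq_nonneg (1 - x)]⟩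
  rw [(hasDerivAt_comparisonWeight hg).deriv]
  calc |lam ^ 2 * (2 * (g x * deriv g x)) + 2 * x|
      ≤ |lam ^ 2 * (2 * (g x * deriv g x))| + |2 * x| := abs_add_le _ _
    _ = lam ^ 2 * (2 * |g x * deriv g x|) + |2 * x| := by
      rw [abs_mul, abs_mul 2, abs_of_nonneg (sq_nonneg lam), abs_two]
    _ ≤ lam ^ 2 * (2 * (|Cg| * g x ^ 2)) + (1 + x ^ 2) := by gcongr
    _ ≤ (1 + 2 * |Cg|) * comparisonWeight g lam x := by
      have h1 : 0 ≤ lam ^ 2 * g x ^ 2 := by positivity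
      have h2 : 0 ≤ |Cg| * (1 + x ^ 2) := by positivity
      unfold comparisonWeight
      linarith

lemma memLp_schrodingerOp_comparisonWeight {E : Type*} [NormedAddCommGroup E]
    [InnerProductSpace ℝ E] {Cb : ℝ} (hg : Continuous g) (hgb : ∀ x, |g x| ≤ Cb) (lam : ℝ)
    (u : 𝓢(ℝ, E)) : MemLp (schrodingerOp (comparisonWeight g lam) u) 2 := by
  have hcont : Continuous (comparisonWeight g lam) := by unfold comparisonWeight; fun_prop
  have hgrowth : (fun x : ℝ => 1 + x ^ 2).HasTemperateGrowth := by fun_prop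
  refine (MemH2.of_schwartzMap u).memLp_deriv_deriv.neg.add
    (memLp_smul_schwartzMap_of_norm_le hcont hgrowth (C := lam ^ 2 * Cb ^ 2 + 1) (fun x => ?_) u 2)
  rw [Real.norm_of_nonneg (comparisonWeight_nonneg g lam x), Real.norm_of_nonneg (by positivity)]
  exact comparisonWeight_le hgb lam x

end ComparisonOperator

theorem weights_bounded_by_N_graph_norm_general {E : Type*} [NormedAddCommGroup E]
    [InnerProductSpace ℝ E] {g : ℝ → ℝ} (hg : Differentiable ℝ g) {Cg : ℝ}
    (hg' : ∀ x, |deriv g x| ≤ Cg * |g x|) :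
    ∃ c : ℝ, 0 < c ∧ ∀ (u : ℝ → E) (lam : ℝ), MemH2 u →
      MemLp (schrodingerOp (comparisonWeight g lam) u) 2 →
        MemLp (fun x => (x ^ 2 : ℝ) • u x) 2 ∧
        lpNorm (fun x => (x ^ 2 : ℝ) • u x) 2 volume + lpNorm (deriv (deriv u)) 2 volume ≤
          c * (lpNorm (schrodingerOp (comparisonWeight g lam) u) 2 volume
            + lpNorm u 2 volume) := by
  refine ⟨3 + 2 * (1 + 2 * |Cg|) ^ 2, by positivity, fun u lam hu hN => ?_⟩
  have hWu := memLp_smul_of_memLp_schrodingerOp hu.memLp_deriv_deriv hN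
  have hle (x : ℝ) : ‖(x ^ 2 : ℝ) • u x‖ ≤ ‖comparisonWeight g lam x • u x‖ := by
    rw [norm_smul, norm_smul, Real.norm_of_nonneg (sq_nonneg x),
      Real.norm_of_nonneg (comparisonWeight_nonneg g lam x)]
    exact mul_le_mul_of_nonneg_right (sq_le_comparisonWeight g lam x) (norm_nonneg _)
  have hx2u : MemLp (fun x => (x ^ 2 : ℝ) • u x) 2 :=
    hWu.of_le ((continuous_pow 2).aestronglyMeasurable.smul hu.memLp.1) (.of_forall hle)
  refine ⟨hx2u, le_trans ?_ (lpNorm_smul_add_lpNorm_deriv_deriv_le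
    (fun x => (hasDerivAt_comparisonWeight (hg x)).differentiableAt)
    (comparisonWeight_nonneg g lam) (fun x => abs_deriv_comparisonWeight_le (hg x) (hg' x)) hu hN)⟩
  gcongr
  exact (lpNorm_mono_real hWu.norm hle).trans_eq (lpNorm_norm hWu.1 2)

/-- `x²` and `D² = −d²/dx²` are bounded by the graph norm of `N`, uniformly
in `λ ≥ 1`: there is `c > 0` with `‖x²u‖ + ‖u''‖ ≤ c(‖Nu‖ + ‖u‖)` for every Schwartz `u`. -/
theorem weights_bounded_by_N_graph_norm
    (g : ℝ → ℝ) (hg_smooth : ContDiff ℝ (⊤ : ℕ∞) g) (Cb : ℝ) (hg_bdd : ∀ x : ℝ, |g x| ≤ Cb)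
    (Cg : ℝ) (hCg : 0 < Cg) (hg' : ∀ x : ℝ, |deriv g x| ≤ Cg * |g x|) :
    ∃ c : ℝ, 0 < c ∧ ∀ (u : SchwartzMap ℝ V4) (lam : ℝ), 1 ≤ lam →
      L2norm (fun x => (x ^ 2 : ℝ) • u x) + L2norm (fun x => deriv (deriv ⇑u) x) ≤
        c * (L2norm (Nop g lam ⇑u) + L2norm ⇑u) := by
  obtain ⟨c, hc, hbound⟩ :=
    weights_bounded_by_N_graph_norm_general (E := V4) (hg_smooth.differentiable (by simp)) hg'
  refine ⟨c, hc, fun u lam _ => ?_⟩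
  have hu := MemH2.of_schwartzMap u
  have hN := memLp_schrodingerOp_comparisonWeight hg_smooth.continuous hg_bdd lam u
  obtain ⟨hx2u, hle⟩ := hbound u lam hu hN
  rw [schrodingerOp_comparisonWeight] at hN hle
  rwa [lpNorm_two_eq_sqrt_integral hx2u.1, lpNorm_two_eq_sqrt_integral hu.memLp_deriv_deriv.1,
    lpNorm_two_eq_sqrt_integral hN.1, lpNorm_two_eq_sqrt_integral hu.memLp.1] at hle
end
end

section
/- There exists a constant C > 0, uniform in λ ≥ 1, such that for every u in the Schwartz space 𝒮(ℝ, ℂ⁴): ‖Du‖² + λ²‖gu‖² ≤ C(‖H₀u‖² + ‖u‖²). -/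
noncomputable section

open MeasureTheory

/-!
The pointwise square of `A D u + h B u` is `‖u'‖² + ‖h u‖² + 2 h b(u', u)`, where
`b(v, w) = Re ⟨-iAv, Bw⟩` is symmetric exactly because `A` and `B` anticommute. Hence
`2 h b(u', u)` is the derivative of `h b(u, u)` up to the zeroth-order term `-h' b(u, u)`, and after
integration only this commutator term survives. It is controlled by `C |h| ‖u‖²` and absorbed into
half of `‖h u‖²`. Uniformity in `λ` comes from `|h'| ≤ C |h|` being invariant under scaling of `h`:
one applies the estimate to `h = λ g`. The potential `f` is a bounded perturbation.
-/

section CrossForm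

variable {E F : Type*} [NormedAddCommGroup E] [InnerProductSpace ℂ E]
  [NormedAddCommGroup F] [InnerProductSpace ℂ F] {A B : E →L[ℂ] F}

/-- The real bilinear form `b(v, w) = Re ⟨-iAv, Bw⟩`, which gives the cross term
`2 Re ⟨A D u, h B u⟩ = 2 h b(u', u)` in the square of `A D u + h B u`, where `D = -i d/dx`. -/
def crossForm (A B : E →L[ℂ] F) (v w : E) : ℝ :=
  (inner ℂ (A ((-Complex.I) • v)) (B w)).re

lemma crossForm_smul_right (c : ℝ) (v w : E) :
    crossForm A B v (c • w) = c * crossForm A B v w := by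
  rw [crossForm, B.map_smul_of_tower, inner_smul_right_eq_smul]
  exact Complex.smul_re c _

lemma crossForm_comm (hAB : ∀ v w, inner ℂ (A v) (B w) = -inner ℂ (B v) (A w)) (v w : E) :
    crossForm A B v w = crossForm A B w v := by
  have hvw : inner ℂ (A v) (B w) = -starRingEnd ℂ (inner ℂ (A w) (B v)) := by
    rw [hAB, inner_conj_symm]
  simp only [crossForm, map_smul, inner_smul_left, hvw, Complex.mul_re, Complex.neg_re,
    Complex.neg_im, Complex.conj_re, Complex.conj_im, Complex.I_re, Complex.I_im]
  ring

lemma abs_crossForm_le (hA : ∀ v, ‖A v‖ = ‖v‖) (hB : ∀ v, ‖B v‖ = ‖v‖) (v w : E) :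
    |crossForm A B v w| ≤ ‖v‖ * ‖w‖ :=
  calc |crossForm A B v w| ≤ ‖A ((-Complex.I) • v)‖ * ‖B w‖ :=
        (Complex.abs_re_le_norm _).trans (norm_inner_le_norm _ _)
    _ = ‖v‖ * ‖w‖ := by rw [hA, hB, norm_smul, norm_neg, Complex.norm_I, one_mul]

lemma norm_add_smul_sq_eq_crossForm (hA : ∀ v, ‖A v‖ = ‖v‖) (hB : ∀ v, ‖B v‖ = ‖v‖)
    (c : ℝ) (v w : E) :
    ‖A ((-Complex.I) • v) + c • B w‖ ^ 2 =
      ‖v‖ ^ 2 + ‖c • w‖ ^ 2 + 2 * (c * crossForm A B v w) := by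
  have cross : RCLike.re (inner ℂ (A ((-Complex.I) • v)) (B (c • w))) = c * crossForm A B v w :=
    crossForm_smul_right c v w
  rw [← B.map_smul_of_tower, norm_add_sq (𝕜 := ℂ), cross, hA, hB, norm_smul, norm_neg,
    Complex.norm_I, one_mul]
  ring

lemma hasDerivAt_crossForm_self (hAB : ∀ v w, inner ℂ (A v) (B w) = -inner ℂ (B v) (A w))
    {u : ℝ → E} {u' : E} {x : ℝ} (hu : HasDerivAt u u' x) :
    HasDerivAt (fun y => crossForm A B (u y) (u y)) (2 * crossForm A B u' (u x)) x := by
  have hAu : HasDerivAt (fun y => A ((-Complex.I) • u y)) (A ((-Complex.I) • u')) x :=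
    (A.restrictScalars ℝ).hasFDerivAt.comp_hasDerivAt x (hu.const_smul _)
  have hBu : HasDerivAt (fun y => B (u y)) (B u') x :=
    (B.restrictScalars ℝ).hasFDerivAt.comp_hasDerivAt x hu
  have hre := Complex.reCLM.hasFDerivAt.comp_hasDerivAt x (hAu.inner ℂ hBu)
  refine hre.congr_deriv ?_
  rw [two_mul]
  nth_rewrite 1 [crossForm_comm hAB]
  rfl

variable (A B) in
lemma integrable_crossForm {α : Type*} [MeasurableSpace α] {μ : Measure α} {v w : α → E}
    (hv : MemLp v 2 μ) (hw : MemLp w 2 μ) :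
    Integrable (fun x => crossForm A B (v x) (w x)) μ := by
  have hAv : MemLp (fun x => A ((-Complex.I) • v x)) 2 μ := A.comp_memLp' (hv.const_smul _)
  have hBw : MemLp (fun x => B (w x)) 2 μ := B.comp_memLp' hw
  exact (hAv.norm.integrable_mul hBw.norm).mono'
    (Complex.continuous_re.comp_aestronglyMeasurable (hAv.1.inner hBw.1))
    (.of_forall fun x => (Complex.abs_re_le_norm _).trans (norm_inner_le_norm _ _))

variable (A B) in
lemma integrable_mul_crossForm {α : Type*} [MeasurableSpace α] {μ : Measure α} {h : α → ℝ}
    {v w : α → E} (hv : MemLp v 2 μ) (hhw : MemLp (fun x => h x • w x) 2 μ) :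
    Integrable (fun x => h x * crossForm A B (v x) (w x)) μ := by
  simpa only [crossForm_smul_right] using integrable_crossForm A B hv hhw

end CrossForm

section DiracOperator

variable {E F : Type*} [NormedAddCommGroup E] [InnerProductSpace ℂ E]
  [NormedAddCommGroup F] [InnerProductSpace ℂ F] {A B : E →L[ℂ] F}
  {h : ℝ → ℝ} {C : ℝ} {u : ℝ → E}

/-- The one-dimensional Dirac operator `A D + h B` with `D = -i d/dx`, for a real function `h` and
operators `A`, `B` between complex inner product spaces. The Hamiltonian `H₀` is the case `A = Γ¹`,
`B = Γ²`, `h = λ g`, up to the potential `f`. -/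
def diracOp (A B : E →L[ℂ] F) (h : ℝ → ℝ) (u : ℝ → E) : ℝ → F :=
  fun x => A ((-Complex.I) • deriv u x) + h x • B (u x)

variable (A B) in
lemma memLp_diracOp (hu' : MemLp (deriv u) 2)
    (hhu : MemLp (fun x => h x • u x) 2) : MemLp (diracOp A B h u) 2 := by
  have hBu : MemLp (fun x => h x • B (u x)) 2 := by
    simpa only [Function.comp_def, B.map_smul_of_tower] using B.comp_memLp' hhu
  exact (A.comp_memLp' (hu'.const_smul (-Complex.I))).add hBu

variable (A B) in
lemma integrable_deriv_mul_crossForm_self (hh' : ∀ x, |deriv h x| ≤ C * |h x|)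
    (hu : MemLp u 2) (hhu : MemLp (fun x => h x • u x) 2) :
    Integrable fun x => deriv h x * crossForm A B (u x) (u x) := by
  have hdom := ((integrable_mul_crossForm A B hu hhu).norm).const_mul C
  refine hdom.mono' ((stronglyMeasurable_deriv h).aestronglyMeasurable.mul
    (integrable_crossForm A B hu hu).1) (.of_forall fun x => ?_)
  rw [norm_mul, norm_mul, ← mul_assoc]
  exact mul_le_mul_of_nonneg_right (hh' x) (norm_nonneg _)

lemma two_mul_integral_mul_crossForm_deriv
    (hAB : ∀ v w, inner ℂ (A v) (B w) = -inner ℂ (B v) (A w))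
    (hh : Differentiable ℝ h) (hh' : ∀ x, |deriv h x| ≤ C * |h x|)
    (hud : Differentiable ℝ u) (hu : MemLp u 2) (hu' : MemLp (deriv u) 2)
    (hhu : MemLp (fun x => h x • u x) 2) :
    2 * ∫ x, h x * crossForm A B (deriv u x) (u x) =
      -∫ x, deriv h x * crossForm A B (u x) (u x) := by
  have hderiv : ∀ x, HasDerivAt (fun x => h x * crossForm A B (u x) (u x))
      (deriv h x * crossForm A B (u x) (u x) + h x * (2 * crossForm A B (deriv u x) (u x))) x :=
    fun x => (hh x).hasDerivAt.mul (hasDerivAt_crossForm_self hAB (hud x).hasDerivAt)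
  simp only [mul_left_comm (h _) 2] at hderiv
  have hcomm := integrable_deriv_mul_crossForm_self A B hh' hu hhu
  have hcross := (integrable_mul_crossForm A B hu' hhu).const_mul 2
  have hzero := integral_eq_zero_of_hasDerivAt_of_integrable hderiv (hcomm.add hcross)
    (integrable_mul_crossForm A B hu hhu)
  rw [integral_add hcomm hcross, integral_const_mul] at hzero
  linarith

lemma integral_norm_diracOp_sq (hA : ∀ v, ‖A v‖ = ‖v‖) (hB : ∀ v, ‖B v‖ = ‖v‖)
    (hAB : ∀ v w, inner ℂ (A v) (B w) = -inner ℂ (B v) (A w))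
    (hh : Differentiable ℝ h) (hh' : ∀ x, |deriv h x| ≤ C * |h x|)
    (hud : Differentiable ℝ u) (hu : MemLp u 2) (hu' : MemLp (deriv u) 2)
    (hhu : MemLp (fun x => h x • u x) 2) :
    ∫ x, ‖diracOp A B h u x‖ ^ 2 =
      (∫ x, ‖deriv u x‖ ^ 2) + (∫ x, ‖h x • u x‖ ^ 2)
        - ∫ x, deriv h x * crossForm A B (u x) (u x) := by
  have hu'_sq := hu'.integrable_norm_pow two_ne_zero
  have hhu_sq := hhu.integrable_norm_pow two_ne_zero
  have hdiag : Integrable fun x => ‖deriv u x‖ ^ 2 + ‖h x • u x‖ ^ 2 := hu'_sq.add hhu_sq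
  simp only [diracOp, norm_add_smul_sq_eq_crossForm hA hB]
  rw [integral_add hdiag ((integrable_mul_crossForm A B hu' hhu).const_mul 2),
    integral_add hu'_sq hhu_sq, integral_const_mul,
    two_mul_integral_mul_crossForm_deriv hAB hh hh' hud hu hu' hhu, sub_eq_add_neg]

lemma two_mul_mul_crossForm_self_le (hA : ∀ v, ‖A v‖ = ‖v‖) (hB : ∀ v, ‖B v‖ = ‖v‖)
    {a a' : ℝ} (ha : |a'| ≤ C * |a|) (v : E) :
    2 * (a' * crossForm A B v v) ≤ ‖a • v‖ ^ 2 + C ^ 2 * ‖v‖ ^ 2 :=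
  calc 2 * (a' * crossForm A B v v) ≤ 2 * (|a'| * |crossForm A B v v|) := by
        rw [← abs_mul]
        exact mul_le_mul_of_nonneg_left (le_abs_self _) two_pos.le
    _ ≤ 2 * (C * |a| * (‖v‖ * ‖v‖)) := by
        gcongr
        · exact (abs_nonneg _).trans ha
        · exact abs_crossForm_le hA hB v v
    _ = 2 * ‖a • v‖ * (C * ‖v‖) := by rw [norm_smul, Real.norm_eq_abs]; ring
    _ ≤ ‖a • v‖ ^ 2 + (C * ‖v‖) ^ 2 := two_mul_le_add_sq _ _
    _ = ‖a • v‖ ^ 2 + C ^ 2 * ‖v‖ ^ 2 := by rw [mul_pow]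

lemma two_mul_integral_deriv_mul_crossForm_self_le
    (hA : ∀ v, ‖A v‖ = ‖v‖) (hB : ∀ v, ‖B v‖ = ‖v‖) (hh' : ∀ x, |deriv h x| ≤ C * |h x|)
    (hu : MemLp u 2) (hhu : MemLp (fun x => h x • u x) 2) :
    2 * ∫ x, deriv h x * crossForm A B (u x) (u x) ≤
      (∫ x, ‖h x • u x‖ ^ 2) + C ^ 2 * ∫ x, ‖u x‖ ^ 2 := by
  have hu_sq := (hu.integrable_norm_pow two_ne_zero).const_mul (C ^ 2)
  have hhu_sq := hhu.integrable_norm_pow two_ne_zero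
  rw [← integral_const_mul, ← integral_const_mul, ← integral_add hhu_sq hu_sq]
  exact integral_mono ((integrable_deriv_mul_crossForm_self A B hh' hu hhu).const_mul 2)
    (hhu_sq.add hu_sq) fun x => two_mul_mul_crossForm_self_le hA hB (hh' x) (u x)

theorem elliptic_estimate_diracOp (hA : ∀ v, ‖A v‖ = ‖v‖) (hB : ∀ v, ‖B v‖ = ‖v‖)
    (hAB : ∀ v w, inner ℂ (A v) (B w) = -inner ℂ (B v) (A w))
    (hh : Differentiable ℝ h) (hh' : ∀ x, |deriv h x| ≤ C * |h x|)
    (hud : Differentiable ℝ u) (hu : MemLp u 2) (hu' : MemLp (deriv u) 2)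
    (hhu : MemLp (fun x => h x • u x) 2) :
    (∫ x, ‖deriv u x‖ ^ 2) + (∫ x, ‖h x • u x‖ ^ 2) ≤
      2 * (∫ x, ‖diracOp A B h u x‖ ^ 2) + C ^ 2 * ∫ x, ‖u x‖ ^ 2 := by
  have hsq := integral_norm_diracOp_sq hA hB hAB hh hh' hud hu hu' hhu
  have hcomm := two_mul_integral_deriv_mul_crossForm_self_le hA hB hh' hu hhu
  have hu'_nonneg : 0 ≤ ∫ x, ‖deriv u x‖ ^ 2 := integral_nonneg fun x => sq_nonneg _
  linarith

end DiracOperator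

section BoundedPerturbation

variable {α E : Type*} [MeasurableSpace α] {μ : Measure α} [NormedAddCommGroup E]

lemma integral_norm_sq_le_two_mul_add {v w : α → E} (hv : MemLp v 2 μ) (hw : MemLp w 2 μ) :
    ∫ x, ‖v x‖ ^ 2 ∂μ ≤ 2 * ((∫ x, ‖v x + w x‖ ^ 2 ∂μ) + ∫ x, ‖w x‖ ^ 2 ∂μ) := by
  have hvw_sq := (hv.add hw).integrable_norm_pow two_ne_zero
  have hw_sq := hw.integrable_norm_pow two_ne_zero
  have hpointwise (x : α) : ‖v x‖ ^ 2 ≤ 2 * (‖v x + w x‖ ^ 2 + ‖w x‖ ^ 2) :=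
    calc ‖v x‖ ^ 2 ≤ (‖v x + w x‖ + ‖w x‖) ^ 2 := by
          gcongr
          simpa only [add_sub_cancel_right] using norm_sub_le (v x + w x) (w x)
      _ ≤ 2 * (‖v x + w x‖ ^ 2 + ‖w x‖ ^ 2) := add_sq_le
  refine (integral_mono (hv.integrable_norm_pow two_ne_zero)
    ((hvw_sq.add hw_sq).const_mul 2) hpointwise).trans_eq ?_
  rw [integral_const_mul]
  exact congrArg _ (integral_add hvw_sq hw_sq)

variable [NormedSpace ℝ E] {f : α → ℝ} {M : ℝ} {u : α → E}

lemma memLp_smul_of_abs_le {p : ENNReal} (hf : AEStronglyMeasurable f μ) (hM : ∀ x, |f x| ≤ M)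
    (hu : MemLp u p μ) : MemLp (fun x => f x • u x) p μ :=
  hu.smul (memLp_top_of_bound hf M (.of_forall hM))

lemma integral_norm_smul_sq_le_of_abs_le (hM : ∀ x, |f x| ≤ M) (hu : MemLp u 2 μ) :
    ∫ x, ‖f x • u x‖ ^ 2 ∂μ ≤ M ^ 2 * ∫ x, ‖u x‖ ^ 2 ∂μ := by
  rw [← integral_const_mul]
  have hpointwise (x : α) : ‖f x • u x‖ ^ 2 ≤ M ^ 2 * ‖u x‖ ^ 2 := by
    rw [norm_smul, mul_pow]
    gcongr
    exact hM x
  exact integral_mono_of_nonneg (.of_forall fun x => sq_nonneg _)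
    ((hu.integrable_norm_pow two_ne_zero).const_mul _) (.of_forall hpointwise)

end BoundedPerturbation

theorem elliptic_estimate_H0_general
    {E : Type*} [NormedAddCommGroup E] [InnerProductSpace ℂ E] {A B : E →L[ℂ] E}
    (hA : ∀ v, ‖A v‖ = ‖v‖) (hB : ∀ v, ‖B v‖ = ‖v‖)
    (hAB : ∀ v w, inner ℂ (A v) (B w) = -inner ℂ (B v) (A w))
    {h : ℝ → ℝ} (hh : Differentiable ℝ h) {C : ℝ} (hh' : ∀ x, |deriv h x| ≤ C * |h x|)
    {f : ℝ → ℝ} (hf : AEStronglyMeasurable f) {M : ℝ} (hM : ∀ x, |f x| ≤ M)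
    {u : ℝ → E} (hud : Differentiable ℝ u) (hu : MemLp u 2) (hu' : MemLp (deriv u) 2)
    (hhu : MemLp (fun x => h x • u x) 2) :
    (∫ x, ‖deriv u x‖ ^ 2) + (∫ x, ‖h x • u x‖ ^ 2) ≤
      (4 + 4 * M ^ 2 + C ^ 2) *
        ((∫ x, ‖diracOp A B h u x + f x • u x‖ ^ 2) + ∫ x, ‖u x‖ ^ 2) := by
  have hfree := elliptic_estimate_diracOp hA hB hAB hh hh' hud hu hu' hhu
  have hpert := integral_norm_sq_le_two_mul_add (memLp_diracOp A B hu' hhu)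
    (memLp_smul_of_abs_le hf hM hu)
  have hpot := integral_norm_smul_sq_le_of_abs_le hM hu
  have hu_nonneg : 0 ≤ ∫ x, ‖u x‖ ^ 2 := integral_nonneg fun x => sq_nonneg _
  have hH_nonneg : 0 ≤ (4 * M ^ 2 + C ^ 2) * ∫ x, ‖diracOp A B h u x + f x • u x‖ ^ 2 :=
    mul_nonneg (by positivity) (integral_nonneg fun x => sq_nonneg _)
  linarith

section Matrices

variable {Γ Γ1 Γ2 : Matrix (Fin 4) (Fin 4) ℂ}

lemma Mop_apply_Mop (Γ1 Γ2 : Matrix (Fin 4) (Fin 4) ℂ) (v : V4) :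
    Mop Γ1 (Mop Γ2 v) = Mop (Γ1 * Γ2) v := by
  rw [Mop, Mop, Mop, map_mul, mul_apply_eq_comp]

lemma inner_Mop_left (hΓ : Γ.IsHermitian) (v w : V4) :
    inner ℂ (Mop Γ v) w = inner ℂ v (Mop Γ w) :=
  Matrix.isSymmetric_toEuclideanLin_iff.mpr hΓ v w

lemma norm_Mop (hΓ : Γ.IsHermitian) (hsq : Γ * Γ = 1) (v : V4) : ‖Mop Γ v‖ = ‖v‖ := by
  have hinner : inner ℂ (Mop Γ v) (Mop Γ v) = inner ℂ v v := by
    rw [inner_Mop_left hΓ, Mop_apply_Mop, hsq, Mop, map_one, one_apply_eq_self]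
  rw [norm_eq_sqrt_re_inner (𝕜 := ℂ), hinner, ← norm_eq_sqrt_re_inner]

lemma inner_Mop_Mop_eq_neg (hΓ1 : Γ1.IsHermitian) (hΓ2 : Γ2.IsHermitian)
    (hanticomm : Γ1 * Γ2 + Γ2 * Γ1 = 0) (v w : V4) :
    inner ℂ (Mop Γ1 v) (Mop Γ2 w) = -inner ℂ (Mop Γ2 v) (Mop Γ1 w) := by
  rw [inner_Mop_left hΓ1, inner_Mop_left hΓ2, Mop_apply_Mop, Mop_apply_Mop,
    eq_neg_of_add_eq_zero_left hanticomm, Mop, map_neg, neg_apply,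
    inner_neg_right, Mop]

end Matrices

lemma L2norm_sq (u : ℝ → V4) : L2norm u ^ 2 = ∫ x, ‖u x‖ ^ 2 :=
  Real.sq_sqrt (integral_nonneg fun x => sq_nonneg ‖u x‖)

lemma L2norm_Dop_sq (u : ℝ → V4) : L2norm (Dop u) ^ 2 = ∫ x, ‖deriv u x‖ ^ 2 := by
  simp only [L2norm_sq, Dop, norm_smul, norm_neg, Complex.norm_I, one_mul]

lemma sq_mul_L2norm_sq (c : ℝ) (v : ℝ → V4) :
    c ^ 2 * L2norm v ^ 2 = ∫ x, ‖c • v x‖ ^ 2 := by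
  simp only [L2norm_sq, norm_smul, mul_pow, Real.norm_eq_abs, sq_abs, integral_const_mul]

lemma H0op_eq_diracOp_add (Γ1 Γ2 : Matrix (Fin 4) (Fin 4) ℂ) (g f : ℝ → ℝ) (lam : ℝ)
    (u : ℝ → V4) :
    H0op Γ1 Γ2 g f lam u =
      fun x => diracOp (Mop Γ1) (Mop Γ2) (fun y => lam * g y) u x + f x • u x :=
  rfl

lemma abs_deriv_const_mul_le {g : ℝ → ℝ} {C x : ℝ} (hg : |deriv g x| ≤ C * |g x|) (c : ℝ) :
    |deriv (fun y => c * g y) x| ≤ C * |c * g x| := by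
  rw [deriv_const_mul_field, abs_mul, abs_mul, mul_left_comm]
  exact mul_le_mul_of_nonneg_left hg (abs_nonneg c)

/-- the elliptic-type estimate: there is `C > 0` uniform in `λ ≥ 1` with
`‖Du‖² + λ²‖gu‖² ≤ C(‖H₀u‖² + ‖u‖²)` for every Schwartz `u`. -/
theorem elliptic_estimate_H0
    (Γ1 Γ2 : Matrix (Fin 4) (Fin 4) ℂ)
    (hΓ1_herm : Γ1.IsHermitian) (hΓ2_herm : Γ2.IsHermitian)
    (hΓ1_sq : Γ1 * Γ1 = 1) (hΓ2_sq : Γ2 * Γ2 = 1)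
    (hanticomm : Γ1 * Γ2 + Γ2 * Γ1 = 0)
    (g : ℝ → ℝ) (hg_smooth : ContDiff ℝ (⊤ : ℕ∞) g) (Cb : ℝ) (hg_bdd : ∀ x : ℝ, |g x| ≤ Cb)
    (Cg : ℝ) (hCg : 0 < Cg) (hg' : ∀ x : ℝ, |deriv g x| ≤ Cg * |g x|)
    (f : ℝ → ℝ) (hf_smooth : ContDiff ℝ (⊤ : ℕ∞) f)
    (Mf : ℝ) (hf_bdd : ∀ x : ℝ, |f x| ≤ Mf)
    (Mf' : ℝ) (hf'_bdd : ∀ x : ℝ, |deriv f x| ≤ Mf') :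
    ∃ C : ℝ, 0 < C ∧ ∀ (u : SchwartzMap ℝ V4) (lam : ℝ), 1 ≤ lam →
      L2norm (Dop ⇑u) ^ 2 + lam ^ 2 * L2norm (fun x => g x • u x) ^ 2 ≤
        C * (L2norm (H0op Γ1 Γ2 g f lam ⇑u) ^ 2 + L2norm ⇑u ^ 2) := by
  refine ⟨4 + 4 * Mf ^ 2 + Cg ^ 2, by positivity, fun u lam _ => ?_⟩
  have hu : MemLp u 2 := u.memLp 2
  have hu' : MemLp (deriv u) 2 := (SchwartzMap.derivCLM ℝ V4 u).memLp 2 volume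
  have hgu : MemLp (fun x => (lam * g x) • u x) 2 := by
    simp only [mul_smul]
    exact (memLp_smul_of_abs_le hg_smooth.continuous.aestronglyMeasurable hg_bdd hu).const_smul lam
  rw [L2norm_Dop_sq, sq_mul_L2norm_sq, L2norm_sq, L2norm_sq, H0op_eq_diracOp_add]
  simp only [smul_smul]
  exact elliptic_estimate_H0_general (norm_Mop hΓ1_herm hΓ1_sq) (norm_Mop hΓ2_herm hΓ2_sq)
    (inner_Mop_Mop_eq_neg hΓ1_herm hΓ2_herm hanticomm)
    ((hg_smooth.differentiable (by simp)).const_mul lam)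
    (fun x => abs_deriv_const_mul_le (hg' x) lam)
    hf_smooth.continuous.aestronglyMeasurable hf_bdd u.differentiable hu hu' hgu
end
end
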